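/- Let X ∈ ℝ^{n×p} have full row rank with n < p, let y ∈ ℝⁿ, and suppose 0 < α < 2/λ_max(XᵀX), where λ_max(XᵀX) is the largest eigenvalue of XᵀX. Then for every initial value β^{(0)} ∈ ℝᵖ, the gradient descent iterates β^{(k)} = β^{(k-1)} + α Xᵀ(y − X β^{(k-1)}) converge, with limit β^{(∞)} = Xᵀ(XXᵀ)^{-1} y + (I_p − Xᵀ(XXᵀ)^{-1} X) β^{(0)}. In particular, X β^{(∞)} = y. -/

import Mathlib

open Matrix Filter

/-- A square matrix over a field whose rank equals its size is invertible. -/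
theorem Matrix.isUnit_of_rank_eq_card {n K : Type*} [Fintype n] [DecidableEq n] [Field K]
    {M : Matrix n n K} (h : M.rank = Fintype.card n) : IsUnit M := by
  rw [← Matrix.linearIndependent_rows_iff_isUnit, linearIndependent_iff_card_eq_finrank_span,
    Set.finrank, ← Matrix.rank_eq_finrank_span_row, h]

/-- Applying powers of `1 - α A` to the range of a positive semidefinite `A` converges to zero
when `α` is positive and `α λ < 2` for every eigenvalue `λ` of `A`. -/
theorem Matrix.PosSemidef.tendsto_one_sub_smul_pow_mulVec {m : Type*} [Fintype m] [DecidableEq m]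
    {A : Matrix m m ℝ} (hA : A.PosSemidef) {α : ℝ} (hα : 0 < α)
    (hlt : ∀ i, α * hA.isHermitian.eigenvalues i < 2) (v : m → ℝ) :
    Tendsto (fun k : ℕ => (1 - α • A) ^ k *ᵥ (A *ᵥ v)) atTop (nhds 0) := by
  set b := hA.isHermitian.eigenvectorBasis
  set l := hA.isHermitian.eigenvalues
  have heig (i) : A *ᵥ ⇑(b i) = l i • ⇑(b i) := hA.isHermitian.mulVec_eigenvectorBasis i
  have hpow (k : ℕ) (i) : (1 - α • A) ^ k *ᵥ ⇑(b i) = (1 - α * l i) ^ k • ⇑(b i) := by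
    induction k with
    | zero => simp
    | succ k ih =>
      rw [pow_succ, ← mulVec_mulVec, sub_mulVec, one_mulVec, smul_mulVec, heig, smul_smul,
        mulVec_sub, mulVec_smul, ih, smul_smul, ← sub_smul]
      congr 1
      ring
  have hv : v = ∑ i, b.repr (WithLp.toLp 2 v) i • ⇑(b i) := by
    have := congrArg WithLp.ofLp (b.sum_repr (WithLp.toLp 2 v))
    simpa using this.symm
  have hterm (k : ℕ) : (1 - α • A) ^ k *ᵥ (A *ᵥ v) =
      ∑ i, ((1 - α * l i) ^ k * l i) • b.repr (WithLp.toLp 2 v) i • ⇑(b i) := by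
    conv_lhs => rw [hv]
    simp only [mulVec_sum, mulVec_smul, heig, hpow, smul_smul]
    refine Finset.sum_congr rfl fun i _ => ?_
    congr 1
    ring
  simp only [hterm]
  have hcoeff (i) : Tendsto (fun k : ℕ => (1 - α * l i) ^ k * l i) atTop (nhds 0) := by
    rcases (hA.eigenvalues_nonneg i).eq_or_lt with h | h
    · have hl : l i = 0 := h.symm
      simp [hl]
    · have hpos : 0 < α * l i := mul_pos hα h
      have habs : |1 - α * l i| < 1 := abs_lt.2 ⟨by linarith [hlt i], by linarith⟩
      simpa using (tendsto_pow_atTop_nhds_zero_of_abs_lt_one habs).mul_const (l i)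
  simpa only [zero_smul, Finset.sum_const_zero] using tendsto_finsetSum Finset.univ fun i _ =>
    (hcoeff i).smul_const (b.repr (WithLp.toLp 2 v) i • (b i : m → ℝ))

/-- For a convergent step size `0 < α < 2/λ_max(XᵀX)`, the gradient
descent iterates converge to `β^{(∞)} = Xᵀ(XXᵀ)⁻¹y + (I_p − Xᵀ(XXᵀ)⁻¹X)β^{(0)}`, which
interpolates: `X β^{(∞)} = y`. -/
theorem gradient_descent_limit
    {n p : ℕ} (hnp : n < p)
    (X : Matrix (Fin n) (Fin p) ℝ) (hX : X.rank = n)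
    (y : Fin n → ℝ)
    (hherm : (Xᵀ * X).IsHermitian)
    (lammax : ℝ) (hlam : IsGreatest (Set.range hherm.eigenvalues) lammax)
    (α : ℝ) (hα₀ : 0 < α) (hα₁ : α < 2 / lammax) :
    ∀ β0 : Fin p → ℝ,
      Tendsto (fun k : ℕ =>
          (fun b : Fin p → ℝ => b + α • (Xᵀ *ᵥ (y - X *ᵥ b)))^[k] β0)
        atTop
        (nhds (Xᵀ *ᵥ ((X * Xᵀ)⁻¹ *ᵥ y) +
          ((1 : Matrix (Fin p) (Fin p) ℝ) - Xᵀ * (X * Xᵀ)⁻¹ * X) *ᵥ β0)) ∧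
      X *ᵥ (Xᵀ *ᵥ ((X * Xᵀ)⁻¹ *ᵥ y) +
          ((1 : Matrix (Fin p) (Fin p) ℝ) - Xᵀ * (X * Xᵀ)⁻¹ * X) *ᵥ β0) = y := by
  intro β0
  have hunit : IsUnit (X * Xᵀ) :=
    Matrix.isUnit_of_rank_eq_card (by rw [rank_self_mul_transpose, hX, Fintype.card_fin])
  have hinv : X * Xᵀ * (X * Xᵀ)⁻¹ = 1 :=
    mul_nonsing_inv _ ((isUnit_iff_isUnit_det _).1 hunit)
  have hinterp : X *ᵥ (Xᵀ *ᵥ ((X * Xᵀ)⁻¹ *ᵥ y) +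
      ((1 : Matrix (Fin p) (Fin p) ℝ) - Xᵀ * (X * Xᵀ)⁻¹ * X) *ᵥ β0) = y := by
    have hker : X * (1 - Xᵀ * (X * Xᵀ)⁻¹ * X) = 0 := by
      rw [Matrix.mul_sub, Matrix.mul_one, ← Matrix.mul_assoc, ← Matrix.mul_assoc, hinv,
        Matrix.one_mul, sub_self]
    simp only [mulVec_add, mulVec_mulVec, ← Matrix.mul_assoc, hinv, hker, one_mulVec, zero_mulVec,
      add_zero]
  refine ⟨?_, hinterp⟩
  set L := Xᵀ *ᵥ ((X * Xᵀ)⁻¹ *ᵥ y) +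
    ((1 : Matrix (Fin p) (Fin p) ℝ) - Xᵀ * (X * Xᵀ)⁻¹ * X) *ᵥ β0 with hL
  have hpsd : (Xᵀ * X).PosSemidef := by
    simpa using posSemidef_conjTranspose_mul_self X
  have hlam_nonneg : 0 ≤ lammax := by
    obtain ⟨i, rfl⟩ := hlam.1
    exact hpsd.eigenvalues_nonneg i
  have hlam_pos : 0 < lammax := hlam_nonneg.lt_of_ne' fun h => by
    rw [h, div_zero] at hα₁
    exact hα₁.not_gt hα₀
  have hlt (i) : α * hherm.eigenvalues i < 2 :=
    (mul_le_mul_of_nonneg_left (hlam.2 ⟨i, rfl⟩) hα₀.le).trans_lt ((lt_div_iff₀ hlam_pos).1 hα₁)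
  have hrange : (Xᵀ * X) *ᵥ (Xᵀ *ᵥ ((X * Xᵀ)⁻¹ *ᵥ ((X * Xᵀ)⁻¹ *ᵥ (X *ᵥ β0 - y)))) =
      β0 - L := by
    rw [← mulVec_mulVec, mulVec_mulVec _ X, mulVec_mulVec _ (X * Xᵀ), hinv, one_mulVec, hL]
    simp only [mulVec_sub, sub_mulVec, mulVec_mulVec, one_mulVec, Matrix.mul_assoc]
    abel
  have hiter (k : ℕ) : (fun b : Fin p → ℝ => b + α • (Xᵀ *ᵥ (y - X *ᵥ b)))^[k] β0 =
      (1 - α • (Xᵀ * X)) ^ k *ᵥ (β0 - L) + L := by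
    induction k with
    | zero => simp
    | succ k ih =>
      rw [Function.iterate_succ_apply', ih, pow_succ', ← mulVec_mulVec, mulVec_add, hinterp,
        sub_mulVec, one_mulVec, smul_mulVec, ← mulVec_mulVec, sub_add_cancel_right, mulVec_neg,
        smul_neg]
      abel
  simp only [hiter, ← hrange]
  simpa only [zero_add] using (hpsd.tendsto_one_sub_smul_pow_mulVec hα₀ hlt _).add_const L
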